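/- Let K be a field in which every element is a square (for instance K algebraically closed), let G = SL₂(K), and let V be a G-module such that [u', v'] ∈ C_V(U) for all u' ∈ U and v' ∈ V (equivalently [u'', [u', v]] = 0 for all u', u'' ∈ U, v ∈ V) and such that C_V(T) = 0. Then for every a ∈ C_V(U) and every λ ∈ Kˣ one has u_λ·(w·a) = w·a + i·(t_λ·a); in particular [u, w·a] = i·a for all a ∈ C_V(U). -/

import Mathlib

/-- The unipotent element `u_λ = [[1, λ], [0, 1]]` of `SL₂(K)`. -/
def uu (K : Type*) [Field K] (l : K) : Matrix.SpecialLinearGroup (Fin 2) K :=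
  ⟨!![1, l; 0, 1], by simp [Matrix.det_fin_two_of]⟩

/-- The torus element `t_λ = [[λ, 0], [0, λ⁻¹]]` of `SL₂(K)`, for `λ ∈ Kˣ`. -/
def tt (K : Type*) [Field K] (l : Kˣ) : Matrix.SpecialLinearGroup (Fin 2) K :=
  ⟨!![(l : K), 0; 0, ((l⁻¹ : Kˣ) : K)], by simp [Matrix.det_fin_two_of]⟩

/-- The Weyl element `w = [[0, 1], [-1, 0]]` of `SL₂(K)`. -/
def ww (K : Type*) [Field K] : Matrix.SpecialLinearGroup (Fin 2) K :=
  ⟨!![0, 1; -1, 0], by simp [Matrix.det_fin_two_of]⟩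

/-- The central involution `i = -I` of `SL₂(K)`. -/
def ii (K : Type*) [Field K] : Matrix.SpecialLinearGroup (Fin 2) K :=
  ⟨!![-1, 0; 0, -1], by simp [Matrix.det_fin_two_of]⟩

/-!
The obstruction `b = [u_λ, w • a] - i • (t_λ • a)` lies in `C_V(U)` by the quadratic hypothesis, and
the relation `u_{λ⁻¹} w u_λ w u_{λ⁻¹} = w i t_λ` expresses `w • b` through a commutator with `U`
and `i • a`, so `w • b` lies in `C_V(U)` too. Hence `b` is fixed by `U` and by the opposite
unipotent subgroup `w⁻¹ U w`. These generate `G`, so `b` lies in `C_V(G)`, which is contained in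
`C_V(T) = 0`. Since `i t_λ = t_{-λ}`, the element `i` needs no separate treatment.
-/

open scoped MatrixGroups

section Relations

variable {K : Type*} [Field K]

@[simp]
lemma coe_uu (l : K) : (uu K l : Matrix (Fin 2) (Fin 2) K) = !![1, l; 0, 1] := rfl

@[simp]
lemma coe_tt (l : Kˣ) : (tt K l : Matrix (Fin 2) (Fin 2) K) = !![↑l, 0; 0, ↑l⁻¹] := rfl

@[simp]
lemma coe_ww : (ww K : Matrix (Fin 2) (Fin 2) K) = !![0, 1; -1, 0] := rfl

@[simp]
lemma coe_ii : (ii K : Matrix (Fin 2) (Fin 2) K) = !![-1, 0; 0, -1] := rfl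

lemma ii_eq_tt_neg_one : ii K = tt K (-1) := by
  ext i j
  fin_cases i <;> fin_cases j <;> simp

lemma ii_mul_tt (l : Kˣ) : ii K * tt K l = tt K (-l) := by
  ext i j
  fin_cases i <;> fin_cases j <;> simp

lemma ww_mul_ww : ww K * ww K = tt K (-1) := by
  ext i j
  fin_cases i <;> fin_cases j <;> simp

lemma uu_mul_tt (m : K) (l : Kˣ) : uu K m * tt K l = tt K l * uu K (m / (l : K) ^ 2) := by
  ext i j
  have h : m * (l : K)⁻¹ = l * (m / (l : K) ^ 2) := by field_simp
  fin_cases i <;> fin_cases j <;> simp [h]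

lemma uu_inv_mul_ww_mul_uu_mul_ww_mul_uu_inv (l : Kˣ) :
    uu K ↑l⁻¹ * ww K * uu K l * ww K * uu K ↑l⁻¹ = ww K * tt K (-l) := by
  ext i j
  fin_cases i <;> fin_cases j <;> simp

lemma coe_ww_inv_mul_uu_mul_ww (l : K) :
    ((ww K)⁻¹ * uu K l * ww K : SL(2, K)).val = !![1, 0; -l, 1] := by
  simp [Matrix.adjugate_fin_two]

lemma eq_uu_mul_conj_uu_mul_uu (g : SL(2, K)) (hg : g 1 0 ≠ 0) :
    g = uu K ((g 0 0 - 1) / g 1 0) * ((ww K)⁻¹ * uu K (-g 1 0) * ww K) *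
      uu K ((g 1 1 - 1) / g 1 0) := by
  have hdet : g 0 0 * g 1 1 - g 0 1 * g 1 0 = 1 := by rw [← Matrix.det_fin_two, g.det_coe]
  have h00 : (g 0 0 - 1) / g 1 0 * g 1 0 = g 0 0 - 1 := div_mul_cancel₀ _ hg
  have h01 : g 0 0 * ((g 1 1 - 1) / g 1 0) + (g 0 0 - 1) / g 1 0 = g 0 1 := by
    field_simp
    linear_combination hdet
  have h11 : g 1 0 * ((g 1 1 - 1) / g 1 0) = g 1 1 - 1 := mul_div_cancel₀ _ hg
  ext i j
  fin_cases i <;> fin_cases j <;> simp [h00, h01, h11]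

lemma subgroup_eq_top_of_uu_mem_of_conj_uu_mem (H : Subgroup SL(2, K))
    (hU : ∀ l, uu K l ∈ H) (hconj : ∀ l, (ww K)⁻¹ * uu K l * ww K ∈ H) : H = ⊤ := by
  have mem_of_ne_zero (g : SL(2, K)) (hg : g 1 0 ≠ 0) : g ∈ H := by
    rw [eq_uu_mul_conj_uu_mul_uu g hg]
    exact H.mul_mem (H.mul_mem (hU _) (hconj _)) (hU _)
  rw [Subgroup.eq_top_iff']
  intro g
  by_cases hg : g 1 0 = 0
  · have hg' : g 0 0 ≠ 0 := by
      intro h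
      simpa only [Matrix.det_fin_two, h, hg, zero_mul, mul_zero, sub_zero, zero_ne_one]
        using g.det_coe
    rw [← H.mul_mem_cancel_left (hconj 1)]
    apply mem_of_ne_zero
    rw [Matrix.SpecialLinearGroup.coe_mul, coe_ww_inv_mul_uu_mul_ww]
    simpa [Matrix.mul_apply, hg] using hg'
  · exact mem_of_ne_zero g hg

end Relations

section Invariants

variable (K : Type*) [Field K] (V : Type*) [AddCommGroup V] [DistribMulAction SL(2, K) V]

/-- The subgroup `C_V(U)` of vectors fixed by every `u_λ`, bundled so that sums and differences of
fixed vectors need no computation; membership is definitionally `∀ l, uu K l • v = v`. -/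
def unipotentInvariants : AddSubgroup V where
  carrier := {v | ∀ l : K, uu K l • v = v}
  zero_mem' _ := smul_zero _
  add_mem' hv hw l := by rw [smul_add, hv l, hw l]
  neg_mem' hv l := by rw [smul_neg, hv l]

variable {K V}

lemma tt_smul_mem_unipotentInvariants {a : V} (ha : a ∈ unipotentInvariants K V) (l : Kˣ) :
    tt K l • a ∈ unipotentInvariants K V := fun m => by
  rw [← mul_smul, uu_mul_tt, mul_smul, ha]

lemma mem_fixedPoints_of_mem_of_ww_smul_mem {b : V} (hb : b ∈ unipotentInvariants K V)
    (hwb : ww K • b ∈ unipotentInvariants K V) : b ∈ MulAction.fixedPoints SL(2, K) V := by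
  have stabilizer_eq_top : MulAction.stabilizer SL(2, K) b = ⊤ := by
    apply subgroup_eq_top_of_uu_mem_of_conj_uu_mem _ (fun l => hb l)
    intro l
    rw [MulAction.mem_stabilizer_iff, mul_smul, mul_smul, hwb, inv_smul_smul]
  exact (Subgroup.eq_top_iff' _).mp stabilizer_eq_top

lemma uu_inv_smul_ww_smul_commutator {a : V} (ha : a ∈ unipotentInvariants K V) (l : Kˣ) :
    uu K ↑l⁻¹ • ww K • (uu K l • ww K • a - ww K • a) =
      ww K • tt K (-l) • a - tt K (-1) • a := by
  have braid : uu K ↑l⁻¹ • ww K • uu K l • ww K • a = ww K • tt K (-l) • a := by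
    simpa only [mul_smul, ha _] using
      congrArg (· • a) (uu_inv_mul_ww_mul_uu_mul_ww_mul_uu_inv l)
  have weyl : uu K ↑l⁻¹ • ww K • ww K • a = tt K (-1) • a := by
    rw [← mul_smul (ww K), ww_mul_ww, tt_smul_mem_unipotentInvariants ha]
  rw [smul_sub, smul_sub, braid, weyl]

lemma commutator_sub_tt_smul_mem_fixedPoints
    (hquad : ∀ (l : K) (v : V), uu K l • v - v ∈ unipotentInvariants K V)
    {a : V} (ha : a ∈ unipotentInvariants K V) (l : Kˣ) :
    uu K l • ww K • a - ww K • a - tt K (-l) • a ∈ MulAction.fixedPoints SL(2, K) V := by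
  set f := uu K l • ww K • a - ww K • a with hf
  have hwb : ww K • (f - tt K (-l) • a) =
      -(uu K ↑l⁻¹ • ww K • f - ww K • f) - tt K (-1) • a := by
    rw [smul_sub, hf, uu_inv_smul_ww_smul_commutator ha]
    abel
  apply mem_fixedPoints_of_mem_of_ww_smul_mem
  · exact sub_mem (hquad _ _) (tt_smul_mem_unipotentInvariants ha _)
  · rw [hwb]
    exact sub_mem (neg_mem (hquad _ _)) (tt_smul_mem_unipotentInvariants ha _)

end Invariants

theorem stmt10_general {K : Type*} [Field K] {V : Type*} [AddCommGroup V]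
    [DistribMulAction SL(2, K) V]
    (hquad : ∀ (l : K) (v : V), uu K l • v - v ∈ unipotentInvariants K V)
    (hG : ∀ v ∈ MulAction.fixedPoints SL(2, K) V, v = 0)
    {a : V} (ha : a ∈ unipotentInvariants K V) :
    (∀ l : Kˣ, uu K (l : K) • (ww K • a) = ww K • a + ii K • (tt K l • a)) ∧
      uu K 1 • (ww K • a) - ww K • a = ii K • a := by
  have commutator_eq (l : Kˣ) : uu K l • ww K • a - ww K • a = tt K (-l) • a :=
    sub_eq_zero.mp (hG _ (commutator_sub_tt_smul_mem_fixedPoints hquad ha l))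
  constructor
  · intro l
    rw [← mul_smul (ii K), ii_mul_tt, ← sub_eq_iff_eq_add', commutator_eq]
  · rw [ii_eq_tt_neg_one, ← commutator_eq, Units.val_one]

/-- Let `K` be a field in which every element is a square,
`G = SL₂(K)`, and `V` a `G`-module such that `[u', v'] ∈ C_V(U)` for all `u' ∈ U`,
`v' ∈ V`, and `C_V(T) = 0`.  Then for every `a ∈ C_V(U)` and `λ ∈ Kˣ`:
`u_λ • (w • a) = w • a + i • (t_λ • a)`; in particular `[u, w • a] = i • a`. -/
theorem stmt10 {K : Type*} [Field K] {V : Type*} [AddCommGroup V]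
    [DistribMulAction (Matrix.SpecialLinearGroup (Fin 2) K) V]
    (hsq : ∀ x : K, ∃ y : K, y * y = x)
    (hquad : ∀ (l : K) (v : V) (m : K),
      uu K m • (uu K l • v - v) = uu K l • v - v)
    (hT : ∀ v : V, (∀ l : Kˣ, tt K l • v = v) → v = 0) :
    ∀ a : V, (∀ l : K, uu K l • a = a) →
      (∀ l : Kˣ, uu K (l : K) • (ww K • a) = ww K • a + ii K • (tt K l • a)) ∧
      uu K 1 • (ww K • a) - ww K • a = ii K • a :=
  fun _ ha => stmt10_general hquad (fun v hv => hT v fun l => hv (tt K l)) ha
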